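/- arXiv:1701.00466 — 2 statements merged into one kernel-verified Lean document; each statement's English description precedes it below -/
import Mathlib

section
/- (a) Let τ be a soft topology on (X, A) such that for all F, G ∈ τ the pointwise intersection a ↦ F a ∩ G a lies in S(𝕏). Then for every a ∈ A there is a topology on X whose open sets are exactly the members of τ(a) := {F a | F ∈ τ}. (b) Conversely, given any family t : A → TopologicalSpace X of topologies on X, the collection τ' := {F : A → Set X | F ∈ S(𝕏) and F a is open in t a for every a} is a soft topology on (X, A). -/
/-!
A soft set in `S(𝕏)` has a soft element through each of its points (`exists_SE_of_mem`), so it is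
recovered from its soft elements (`SS_SE`). Hence elementary unions of such soft sets are computed
pointwise (`SS_biUnion_SE`), and so are elementary intersections as soon as the pointwise
intersection lies in `S(𝕏)`; otherwise the elementary intersection is null (`eInter2_eq_null_or`).
For a single parameter, the hypothesis on pointwise intersections thus turns the soft topology
axioms into the topology axioms. Conversely, pointwise unions and intersections of open sets are
open, and the null soft set is open at every parameter, so collapsing intersections do no harm.
-/

namespace SoftPaper

variable {X Y A : Type*}

/-- The set of soft elements of a soft set `F`. -/
def SE (F : A → Set X) : Set (A → X) := {x | ∀ a, x a ∈ F a}

/-- The soft set generated by a collection `B` of soft elements. -/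
def SS (B : Set (A → X)) : A → Set X := fun a => {y | ∃ x ∈ B, x a = y}

/-- The null soft set Φ. -/
def Null : A → Set X := fun _ => ∅

/-- The absolute soft set 𝕏. -/
def Abs : A → Set X := fun _ => Set.univ

/-- `F` lies in `S(𝕏)`: it is the null soft set or everywhere nonempty. -/
def MemSX (F : A → Set X) : Prop := F = Null ∨ ∀ a, (F a).Nonempty

/-- Soft subset relation `F ⊆̃ G`. -/
def Subset (F G : A → Set X) : Prop := ∀ a, F a ⊆ G a

/-- Elementary union of a family of soft sets. -/
def eUnion {ι : Type*} (F : ι → A → Set X) : A → Set X := SS (⋃ i, SE (F i))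

/-- Elementary intersection of a family of soft sets. -/
def eInter {ι : Type*} (F : ι → A → Set X) : A → Set X := SS (⋂ i, SE (F i))

/-- Binary elementary union `F ⋓ G`. -/
def eUnion2 (F G : A → Set X) : A → Set X := SS (SE F ∪ SE G)

/-- Binary elementary intersection `F ⋒ G`. -/
def eInter2 (F G : A → Set X) : A → Set X := SS (SE F ∩ SE G)

/-- Elementary complement `F^ℂ`. -/
def eCompl (F : A → Set X) : A → Set X := SS {x : A → X | ∀ a, x a ∉ F a}

/-- A soft topology on `(X, A)`: a collection of soft sets, each in `S(𝕏)`,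
containing `Φ` and `𝕏`, closed under elementary unions of arbitrary families of
members and under binary elementary intersections. -/
structure IsSoftTopology (τ : Set (A → Set X)) : Prop where
  memSX : ∀ F ∈ τ, MemSX F
  null_mem : Null ∈ τ
  abs_mem : Abs ∈ τ
  union_mem : ∀ S ⊆ τ, SS (⋃ F ∈ S, SE F) ∈ τ
  inter_mem : ∀ F ∈ τ, ∀ G ∈ τ, eInter2 F G ∈ τ

/-- `F` is soft closed w.r.t. `τ`. -/
def SoftClosed (τ : Set (A → Set X)) (F : A → Set X) : Prop :=
  MemSX F ∧ MemSX (fun a => (F a)ᶜ) ∧ eCompl F ∈ τ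

/-- The soft closure of `F`: the elementary intersection of the family of all
soft closed sets containing `F`. -/
def softClosure (τ : Set (A → Set X)) (F : A → Set X) : A → Set X :=
  SS (⋂ G ∈ {G : A → Set X | SoftClosed τ G ∧ Subset F G}, SE G)

/-- Every collection of soft elements generates a soft set in `S(𝕏)`: one soft element
already gives a point over each parameter. -/
theorem memSX_SS (B : Set (A → X)) : MemSX (SS B) := by
  rcases B.eq_empty_or_nonempty with rfl | ⟨x, hx⟩
  · left
    ext a y
    simp [SS, Null]
  · exact Or.inr fun a => ⟨x a, x, hx, rfl⟩

/-- A soft set in `S(𝕏)` has a soft element through each of its points: choose arbitrary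
points over the other parameters. -/
theorem exists_SE_of_mem {F : A → Set X} (hF : MemSX F) {a : A} {y : X} (hy : y ∈ F a) :
    ∃ x ∈ SE F, x a = y := by
  classical
  rcases hF with rfl | hF
  · exact hy.elim
  · refine ⟨Function.update (fun b => (hF b).some) a y, fun b => ?_, by simp⟩
    by_cases hb : b = a
    · subst hb
      simpa using hy
    · simpa [hb] using (hF b).some_mem

theorem SS_SE {F : A → Set X} (hF : MemSX F) : SS (SE F) = F := by
  ext a y
  constructor
  · rintro ⟨x, hx, rfl⟩
    exact hx a
  · exact exists_SE_of_mem hF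

/-- Elementary unions of members of `S(𝕏)` are pointwise unions. -/
theorem SS_biUnion_SE {S : Set (A → Set X)} (hS : ∀ F ∈ S, MemSX F) (a : A) :
    SS (⋃ F ∈ S, SE F) a = ⋃ F ∈ S, F a := by
  ext y
  simp only [Set.mem_iUnion, exists_prop]
  constructor
  · rintro ⟨x, hx, rfl⟩
    simp only [Set.mem_iUnion, exists_prop] at hx
    obtain ⟨F, hFS, hxF⟩ := hx
    exact ⟨F, hFS, hxF a⟩
  · rintro ⟨F, hFS, hy⟩
    obtain ⟨x, hx, rfl⟩ := exists_SE_of_mem (hS F hFS) hy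
    exact ⟨x, Set.mem_biUnion hFS hx, rfl⟩

theorem eInter2_eq_SS_SE (F G : A → Set X) :
    eInter2 F G = SS (SE fun a => F a ∩ G a) := by
  have h : SE F ∩ SE G = SE fun a => F a ∩ G a := by
    ext x
    exact forall_and.symm
  rw [eInter2, h]

/-- The elementary intersection is the pointwise one, unless some pointwise intersection is
empty, in which case it collapses to the null soft set. -/
theorem eInter2_eq_null_or (F G : A → Set X) :
    eInter2 F G = Null ∨ eInter2 F G = fun a => F a ∩ G a := by
  rw [eInter2_eq_SS_SE]
  rcases memSX_SS (SE fun a => F a ∩ G a) with h | h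
  · exact Or.inl h
  · refine Or.inr (SS_SE (Or.inr fun a => ?_))
    obtain ⟨_, x, hx, -⟩ := h a
    exact ⟨x a, hx a⟩

theorem parametrized_topologies [Nonempty X] [Nonempty A] :
    (∀ τ : Set (A → Set X), IsSoftTopology τ →
      (∀ F ∈ τ, ∀ G ∈ τ, MemSX (fun a => F a ∩ G a)) →
      ∀ a : A, ∃ T : TopologicalSpace X,
        ∀ s : Set X, T.IsOpen s ↔ ∃ F ∈ τ, F a = s) ∧
    (∀ t : A → TopologicalSpace X,
      IsSoftTopology {F : A → Set X | MemSX F ∧ ∀ a, (t a).IsOpen (F a)}) := by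
  refine ⟨fun τ hτ hint a => ?_, fun t => ?_⟩
  · refine ⟨{ IsOpen := fun s => ∃ F ∈ τ, F a = s
              isOpen_univ := ⟨Abs, hτ.abs_mem, rfl⟩
              isOpen_inter := ?_
              isOpen_sUnion := ?_ }, fun s => Iff.rfl⟩
    · rintro _ _ ⟨F, hF, rfl⟩ ⟨G, hG, rfl⟩
      refine ⟨eInter2 F G, hτ.inter_mem F hF G hG, ?_⟩
      rw [eInter2_eq_SS_SE, SS_SE (hint F hF G hG)]
    · intro s hs
      -- All members of `τ` whose value at `a` belongs to `s`; no choice of representatives.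
      refine ⟨_, hτ.union_mem {F | F ∈ τ ∧ F a ∈ s} fun F hF => hF.1, ?_⟩
      rw [SS_biUnion_SE fun F hF => hτ.memSX F hF.1]
      ext y
      simp only [Set.mem_iUnion, exists_prop, Set.mem_sUnion]
      constructor
      · rintro ⟨F, hF, hy⟩
        exact ⟨F a, hF.2, hy⟩
      · rintro ⟨u, hu, hy⟩
        obtain ⟨F, hF, rfl⟩ := hs u hu
        exact ⟨F, ⟨hF, hu⟩, hy⟩
  · refine ⟨fun F hF => hF.1, ⟨Or.inl rfl, fun a => @isOpen_empty X (t a)⟩,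
      ⟨Or.inr fun a => Set.univ_nonempty, fun a => (t a).isOpen_univ⟩, ?_, ?_⟩
    · refine fun S hS => ⟨memSX_SS _, fun a => ?_⟩
      rw [SS_biUnion_SE fun F hF => (hS hF).1]
      exact @isOpen_biUnion _ _ (t a) S (fun F => F a) fun F hF => (hS hF).2 a
    · refine fun F hF G hG => ⟨memSX_SS _, fun a => ?_⟩
      rcases eInter2_eq_null_or F G with h | h
      · rw [h]
        exact @isOpen_empty X (t a)
      · rw [h]
        exact (t a).isOpen_inter _ _ (hF.2 a) (hG.2 a)

end SoftPaper
end

section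
/- Let τ be a soft topology on (X, A). If for every soft closed set F and every U ∈ τ with F ⊆̃ U there exists V ∈ τ with F ⊆̃ V and cl(V) ⊆̃ U, then τ is soft normal: for any two soft closed sets F, G with F a ∩ G a = ∅ for every a, there exist U, V ∈ τ with F ⊆̃ U, G ⊆̃ V, and U ⋒ V = Φ. -/
/-!
The usual argument carries over: given disjoint soft closed `F`, `G`, shrink `eCompl G ⊇ F` to an
open `V ⊇ F` whose closure avoids `G`, and separate `G` from `V` by the complement of the closure.
The point to check is that the elementary operations, which only see full soft elements, are
pointwise here. A soft set in `S(𝕏)` has a soft element through each of its points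
(`exists_mem_SE`), so the elementary complement of a soft closed set is its pointwise complement
(`mem_eCompl_iff`). If `V` has a soft element, then so does every soft closed set containing it,
and modifying that element at one parameter shows that the soft closure of `V` is the pointwise
intersection of those sets (`mem_softClosure`). If `F` has no soft element, it is `Φ`, and the pair
`Φ`, `𝕏` separates.
-/

namespace SoftPaper

variable {X Y A : Type*}

theorem exists_mem_SE {H : A → Set X} (hH : MemSX H) {a : A} {y : X} (hy : y ∈ H a) :
    ∃ x ∈ SE H, x a = y := by
  classical
  rcases hH with rfl | hH
  · exact hy.elim
  · choose f hf using hH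
    refine ⟨Function.update f a y, fun b => ?_, by simp⟩
    by_cases hb : b = a
    · subst hb; simpa using hy
    · simpa [hb] using hf b

theorem mem_eCompl_iff {K : A → Set X} (hK : MemSX (fun a => (K a)ᶜ)) {a : A} {y : X} :
    y ∈ eCompl K a ↔ y ∉ K a := by
  constructor
  · rintro ⟨x, hx, rfl⟩
    exact hx a
  · intro hy
    exact exists_mem_SE hK hy

/-- The soft closure of a soft set with a soft element contains the pointwise intersection of the
soft closed sets above it. -/
theorem mem_softClosure {τ : Set (A → Set X)} {V : A → Set X} {f : A → X} (hf : f ∈ SE V)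
    {a : A} {y : X} (hy : ∀ K, SoftClosed τ K → Subset V K → y ∈ K a) :
    y ∈ softClosure τ V a := by
  classical
  refine ⟨Function.update f a y, ?_, by simp⟩
  simp only [Set.mem_iInter]
  rintro K ⟨hK, hVK⟩ b
  by_cases hb : b = a
  · subst hb; simpa using hy K hK hVK
  · simpa [hb] using hVK b (hf b)

theorem softNormal_of_closure_condition [Nonempty X] [Nonempty A]
    (τ : Set (A → Set X)) (hτ : IsSoftTopology τ)
    (h : ∀ F : A → Set X, SoftClosed τ F → ∀ U ∈ τ, Subset F U →
      ∃ V ∈ τ, Subset F V ∧ Subset (softClosure τ V) U) :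
    ∀ F G : A → Set X, SoftClosed τ F → SoftClosed τ G →
      (∀ a, F a ∩ G a = ∅) →
      ∃ U ∈ τ, ∃ V ∈ τ, Subset F U ∧ Subset G V ∧ eInter2 U V = Null := by
  intro F G hF hG hFG
  rcases hF.1 with rfl | hne
  · refine ⟨Null, hτ.null_mem, Abs, hτ.abs_mem, fun a => le_rfl, fun a => Set.subset_univ _, ?_⟩
    funext a
    refine Set.eq_empty_of_forall_notMem ?_
    rintro y ⟨x, hx, -⟩
    exact hx.1 a
  have hFU : Subset F (eCompl G) := fun a y hy =>
    (mem_eCompl_iff hG.2.1).2 fun hyG => (hFG a).subset ⟨hy, hyG⟩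
  obtain ⟨V, hV, hFV, hcl⟩ := h F hF _ hG.2.2 hFU
  choose f hf using hne
  have hfV : f ∈ SE V := fun a => hFV a (hf a)
  -- The complement of the closure, as the elementary union of complements of closed sets.
  let S : Set (A → Set X) := {O | ∃ K, SoftClosed τ K ∧ Subset V K ∧ O = eCompl K}
  have hS : S ⊆ τ := by
    rintro _ ⟨K, hK, -, rfl⟩
    exact hK.2.2
  refine ⟨V, hV, _, hτ.union_mem S hS, hFV, fun a y hy => ?_, ?_⟩
  · have hycl : y ∉ softClosure τ V a := fun hyc =>
      (mem_eCompl_iff hG.2.1).1 (hcl a hyc) hy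
    have hK : ∃ K, SoftClosed τ K ∧ Subset V K ∧ y ∉ K a := by
      by_contra! hcon
      exact hycl (mem_softClosure hfV hcon)
    obtain ⟨K, hK, hVK, hyK⟩ := hK
    obtain ⟨x, hx, hxa⟩ := exists_mem_SE (hτ.memSX _ hK.2.2) ((mem_eCompl_iff hK.2.1).2 hyK)
    exact ⟨x, Set.mem_biUnion (show eCompl K ∈ S from ⟨K, hK, hVK, rfl⟩) hx, hxa⟩
  · funext a
    refine Set.eq_empty_of_forall_notMem ?_
    rintro y ⟨x, ⟨hxV, hxW⟩, -⟩
    obtain ⟨z, hz, hzx⟩ := hxW a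
    simp only [Set.mem_iUnion] at hz
    obtain ⟨_, ⟨K, hK, hVK, rfl⟩, hzO⟩ := hz
    refine (mem_eCompl_iff hK.2.1).1 (hzO a) ?_
    rw [hzx]
    exact hVK a (hxV a)

end SoftPaper
end
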